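/- For every infinite cardinal Γ: (a) m₀(Γ) has the cf(Γ)⁺-SVM property, i.e. there is a finite constant v working for all set algebras of cardinality at most cf(Γ); and (b) m₀(Γ) does not have the Γ⁺⁺-SVM property, i.e. there is no finite constant v working for all set algebras of cardinality at most Γ⁺. In particular, if Γ is a regular cardinal, the SVM character of m₀(Γ) equals Γ⁺⁺. -/

import Mathlib

/-!
Part (a) rests on a relative form of the Kalton–Roberts theorem (`exists_measure_vanishing`): a
real-valued 1-additive `ν` on a set algebra `F` that is bounded by `1` on a subalgebra `G` is
within `235` of a measure vanishing on `G`. For an `m₀(Γ)`-valued `ν` on an algebra `F` with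
`#F ≤ cf Γ`, well-order `F` in type `ord #F`. The algebra generated by an initial segment has fewer
than `cf Γ` elements, so off a set `S b ⊆ Γ` of size `< #Γ` all coordinates of `ν` are bounded by `1`
on it. Applying the relative theorem at each coordinate `γ`, with `G` the union of the algebras of
those initial segments for which `γ ∉ S b`, gives coordinate measures; the measure at `A ∈ F` is
nonzero only at coordinates in the small set `S b`, with `b` the place of `A`, so it lies in `m₀(Γ)`.

The Kalton–Roberts theorem itself is proved with concentrators: bipartite graphs with `4m` inputs
and `3m` outputs of bounded degree, in which each set of at most `2m` inputs can be matched into the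
outputs (`exists_concentrator`). They show that a 1-additive `f` with `|f| ≤ M` has average at least
`-(3M/4 + 27)` for balanced probability weights (`NearAdd.balanced_ge`). Hahn–Banach duality then
gives a measure within `3M/4 + 29` of `f` (`NearAdd.improve`), and iteration removes the dependence
on `M`. The relative form for finite algebras follows by subtracting the values of the measure on
unions of `G`-atoms through chosen representatives, and the general case by an ultrafilter limit.

For part (b), take `Γ⁺` subsets `N a` of `Γ`, each of size `#Γ`, with pairwise intersections of
size `< #Γ` (`exists_almost_disjoint`). On finite `A ⊆ Γ⁺` put
`ν A γ = max (#{a ∈ A | γ ∈ N a} - 1) 0`, and `ν Aᶜ = -ν A`; this is 1-additive with values in `m₀(Γ)`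
on the finite–cofinite algebra. A measure `μ` with values in `m₀(Γ)` has a coordinate in each `N a`
at which `μ {a}` is below `1/2`. One coordinate `γ` then works for infinitely many `a`, and for `n` of
these the distance between `ν` and `μ` at `γ` is at least `n/2 - 1`.
-/

open Cardinal ENNReal

/-- A set algebra: contains `∅`, closed under complements and finite unions. -/
def IsSetAlg {Ω : Type*} (F : Set (Set Ω)) : Prop :=
  ∅ ∈ F ∧ (∀ A ∈ F, Aᶜ ∈ F) ∧ ∀ A ∈ F, ∀ B ∈ F, A ∪ B ∈ F

/-- `ν` is 1-additive on the set algebra `F`. -/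
def OneAdd {Ω X : Type*} [SeminormedAddCommGroup X] (F : Set (Set Ω)) (ν : Set Ω → X) : Prop :=
  ∀ A ∈ F, ∀ B ∈ F, Disjoint A B → ‖ν (A ∪ B) - ν A - ν B‖ ≤ 1

/-- `μ` is a (finitely additive) vector measure on the set algebra `F`. -/
def VectMeas {Ω X : Type*} [AddCommGroup X] (F : Set (Set Ω)) (μ : Set Ω → X) : Prop :=
  ∀ A ∈ F, ∀ B ∈ F, Disjoint A B → μ (A ∪ B) = μ A + μ B

/-- `K` is a Kalton–Roberts constant. -/
def IsKRConst (K : ℝ) : Prop :=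
  ∀ (Ω : Type) (F : Set (Set Ω)), IsSetAlg F →
    ∀ ν : Set Ω → ℝ, OneAdd F ν →
      ∃ μ : Set Ω → ℝ, VectMeas F μ ∧ ∀ A ∈ F, |ν A - μ A| ≤ K

/-- `X` has the SVM property with constant `v` (arbitrary set algebras). -/
def HasSVMBound (X : Type*) [SeminormedAddCommGroup X] (v : ℝ) : Prop :=
  ∀ (Ω : Type) (F : Set (Set Ω)), IsSetAlg F →
    ∀ ν : Set Ω → X, OneAdd F ν →
      ∃ μ : Set Ω → X, VectMeas F μ ∧ ∀ A ∈ F, ‖ν A - μ A‖ ≤ v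

/-- `X` has the ω-SVM property with constant `v` (finite set algebras). -/
def HasOmegaSVMBound (X : Type*) [SeminormedAddCommGroup X] (v : ℝ) : Prop :=
  ∀ (Ω : Type) (F : Set (Set Ω)), IsSetAlg F → F.Finite →
    ∀ ν : Set Ω → X, OneAdd F ν →
      ∃ μ : Set Ω → X, VectMeas F μ ∧ ∀ A ∈ F, ‖ν A - μ A‖ ≤ v

/-- `X` has the κ-SVM property with constant `v` (set algebras of cardinality `< κ`). -/
def HasKappaSVMBound (X : Type*) [SeminormedAddCommGroup X] (κ : Cardinal) (v : ℝ) : Prop :=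
  ∀ (Ω : Type) (F : Set (Set Ω)), IsSetAlg F → #(↥F) < κ →
    ∀ ν : Set Ω → X, OneAdd F ν →
      ∃ μ : Set Ω → X, VectMeas F μ ∧ ∀ A ∈ F, ‖ν A - μ A‖ ≤ v


/-- The subspace m₀(Γ) of ℓ∞(Γ): functions x such that for every ε > 0 the set
of coordinates with |x γ| ≥ ε has cardinality less than #Γ. -/
noncomputable def mZero (Γ : Type) : Submodule ℝ ↥(lp (fun _ : Γ => ℝ) ⊤) :=
  Submodule.span ℝ {x | ∀ ε : ℝ, 0 < ε → #(↥{γ : Γ | ε ≤ |x γ|}) < #Γ}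


/-! ### Concentrators -/

/-- Existence of concentrators: a bipartite graph with `4m` inputs, `3m` outputs and (with multiplicity)
`12` edges at each input, in which every set of at most `2m` inputs satisfies the counting
condition of the Hall marriage theorem. A union bound shows that a random graph works. -/
theorem exists_concentrator (m : ℕ) (hm : 0 < m) :
    ∃ g : Fin (4 * m) → Fin 12 → Fin (3 * m), ∀ S : Finset (Fin (4 * m)), S.card ≤ 2 * m →
      S.card ≤ (S.biUnion fun i => Finset.univ.image (g i)).card := by
  classical
  by_contra hcon
  push Not at hcon
  -- `bad S T` is the set of graphs sending every edge from `S` into `T`; a graph violating the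
  -- claim lies in `bad S T` for some `S`, `T` of a common size `k` with `1 ≤ k ≤ 2m`.
  let bad : Finset (Fin (4 * m)) → Finset (Fin (3 * m)) → Finset (Fin (4 * m) → Fin 12 → Fin (3 * m)) :=
    fun S T => Fintype.piFinset fun i => if i ∈ S then Fintype.piFinset fun _ => T else Finset.univ
  have hbad : ∀ k, ∀ S ∈ Finset.powersetCard k (Finset.univ : Finset (Fin (4 * m))),
      ∀ T ∈ Finset.powersetCard k (Finset.univ : Finset (Fin (3 * m))),
      ((bad S T).card : ℝ) ≤ ((k : ℝ) / (3 * m)) ^ (12 * k) * ((3 * m : ℝ) ^ 12) ^ (4 * m) := by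
    intro k S hS T hT
    rw [Finset.mem_powersetCard] at hS hT
    have hk : k ≤ 4 * m := by
      have := Finset.card_le_univ S
      rw [hS.2] at this; simpa using this
    have h1 : (bad S T).card = (k ^ 12) ^ k * ((3 * m) ^ 12) ^ (4 * m - k) := by
      simp only [bad, Fintype.card_piFinset, apply_ite Finset.card]
      rw [Finset.prod_ite]
      have hc' : (Finset.univ.filter fun i => i ∉ S).card = 4 * m - k := by
        have h := Finset.card_compl S
        rw [hS.2, Fintype.card_fin] at h
        rw [← h]; congr 1; ext; simp
      simp [hc', hT.2, hS.2]
    rw [h1]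
    have h3 : (3 * m : ℝ) ≠ 0 := by positivity
    have h4 : ((3 * m : ℝ) ^ 12) ^ (4 * m) = ((3 * m : ℝ) ^ 12) ^ k * ((3 * m : ℝ) ^ 12) ^ (4 * m - k) := by
      rw [← pow_add]; congr 1; omega
    rw [h4]
    push_cast
    rw [div_pow, ← pow_mul, ← pow_mul (3 * m : ℝ) 12 k]
    apply le_of_eq
    field_simp
  have hcover : (Finset.univ : Finset (Fin (4 * m) → Fin 12 → Fin (3 * m))) ⊆
      (Finset.Icc 1 (2 * m)).biUnion fun k =>
        (Finset.powersetCard k Finset.univ).biUnion fun S =>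
          (Finset.powersetCard k Finset.univ).biUnion fun T => bad S T := by
    intro g _
    obtain ⟨S, hS, hlt⟩ := hcon g
    obtain ⟨T, hT, hTc⟩ := Finset.exists_superset_card_eq hlt.le
      (by simp; omega : S.card ≤ Fintype.card (Fin (3 * m)))
    simp only [Finset.mem_biUnion, Finset.mem_powersetCard, Finset.mem_Icc]
    refine ⟨S.card, ⟨by omega, hS⟩, S, ⟨Finset.subset_univ _, rfl⟩, T, ⟨Finset.subset_univ _, hTc⟩, ?_⟩
    simp only [bad, Fintype.mem_piFinset]
    intro i
    split_ifs with hi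
    · rw [Fintype.mem_piFinset]
      intro c
      exact hT (Finset.mem_biUnion.2 ⟨i, hi, Finset.mem_image_of_mem _ (Finset.mem_univ c)⟩)
    · exact Finset.mem_univ _
  have hR : (0 : ℝ) < ((3 * m : ℝ) ^ 12) ^ (4 * m) := by positivity
  have hcount : ((3 * m : ℝ) ^ 12) ^ (4 * m) ≤ ∑ k ∈ Finset.Icc 1 (2 * m),
      ((4 * m).choose k : ℝ) * ((3 * m).choose k : ℝ) *
        (((k : ℝ) / (3 * m)) ^ (12 * k) * ((3 * m : ℝ) ^ 12) ^ (4 * m)) := by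
    have h0 : ((3 * m : ℝ) ^ 12) ^ (4 * m) =
        ((Finset.univ : Finset (Fin (4 * m) → Fin 12 → Fin (3 * m))).card : ℝ) := by
      simp
    rw [h0]
    refine le_trans (Nat.cast_le.2 ((Finset.card_le_card hcover).trans Finset.card_biUnion_le)) ?_
    push_cast
    rw [← h0]
    refine Finset.sum_le_sum fun k _ => ?_
    refine le_trans (Nat.cast_le.2 Finset.card_biUnion_le) ?_
    push_cast
    have hA : ∀ S ∈ Finset.powersetCard k (Finset.univ : Finset (Fin (4 * m))),
        (((Finset.powersetCard k Finset.univ).biUnion fun T => bad S T).card : ℝ) ≤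
        ((3 * m).choose k : ℝ) *
        (((k : ℝ) / (3 * m)) ^ (12 * k) * ((3 * m : ℝ) ^ 12) ^ (4 * m)) := by
      intro S hS
      refine le_trans (Nat.cast_le.2 Finset.card_biUnion_le) ?_
      push_cast
      refine (Finset.sum_le_card_nsmul _ _ _ (hbad k S hS)).trans ?_
      simp
    refine (Finset.sum_le_card_nsmul _ _ _ hA).trans ?_
    simp [mul_assoc]
  -- The `k`-th term of the union bound: by `k ^ k / k! ≤ exp k` and `k ≤ 2m` it is at most
  -- `((4 / 3) * (2 / 3) ^ 10 * e ^ 2) ^ k`, as a fraction of all graphs.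
  have hterm : ∀ k ∈ Finset.Icc 1 (2 * m), ((4 * m).choose k : ℝ) * ((3 * m).choose k : ℝ) *
        (((k : ℝ) / (3 * m)) ^ (12 * k) * ((3 * m : ℝ) ^ 12) ^ (4 * m)) ≤
        (1 / 4) ^ k * ((3 * m : ℝ) ^ 12) ^ (4 * m) := by
    intro k hk
    rw [Finset.mem_Icc] at hk
    rw [← mul_assoc]
    refine mul_le_mul_of_nonneg_right ?_ hR.le
    have hk0 : (0 : ℝ) < k := by exact_mod_cast hk.1
    have hm0 : (0 : ℝ) < m := by exact_mod_cast hm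
    have hkm : (k : ℝ) ≤ 2 * m := by exact_mod_cast hk.2
    have c1 : ((4 * m).choose k : ℝ) ≤ (4 * m : ℝ) ^ k / k.factorial := by
      simpa using Nat.choose_le_pow_div (α := ℝ) k (4 * m)
    have c2 : ((3 * m).choose k : ℝ) ≤ (3 * m : ℝ) ^ k / k.factorial := by
      simpa using Nat.choose_le_pow_div (α := ℝ) k (3 * m)
    have c3 : (k : ℝ) ^ k / k.factorial ≤ (Real.exp 1) ^ k := by
      rw [← Real.exp_nat_mul, mul_one]
      exact Real.pow_div_factorial_le_exp _ hk0.le k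
    have hf : (0 : ℝ) < k.factorial := by exact_mod_cast k.factorial_pos
    have hx : (k : ℝ) / (3 * m) ≤ 2 / 3 := by
      rw [div_le_div_iff₀ (by positivity) (by norm_num)]; linarith
    calc ((4 * m).choose k : ℝ) * ((3 * m).choose k : ℝ) * ((k : ℝ) / (3 * m)) ^ (12 * k)
        ≤ ((4 * m : ℝ) ^ k / k.factorial) * ((3 * m : ℝ) ^ k / k.factorial) *
            ((k : ℝ) / (3 * m)) ^ (12 * k) := by gcongr
      _ = ((4 / 3) * ((k : ℝ) / (3 * m)) ^ 10) ^ k * ((k : ℝ) ^ k / k.factorial) ^ 2 := by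
          have : ((k : ℝ) / (3 * m)) ^ (12 * k)
              = (((k : ℝ) / (3 * m)) ^ 10) ^ k * ((k : ℝ) ^ k / (3 * m : ℝ) ^ k) ^ 2 := by
            rw [← div_pow, ← pow_mul, ← pow_mul, ← pow_add]; congr 1; ring
          rw [this]
          generalize ((k : ℝ) / (3 * m)) ^ 10 = y
          rw [mul_pow (4 / 3 : ℝ) y k, div_pow (4 : ℝ) 3 k, mul_pow (4 : ℝ) m k,
            mul_pow (3 : ℝ) m k]
          field_simp
      _ ≤ ((4 / 3) * (2 / 3 : ℝ) ^ 10) ^ k * ((Real.exp 1) ^ k) ^ 2 := by gcongr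
      _ = ((4 / 3) * (2 / 3 : ℝ) ^ 10 * (Real.exp 1) ^ 2) ^ k := by
          rw [mul_pow _ (Real.exp 1 ^ 2)]; ring
      _ ≤ (1 / 4) ^ k := by
          gcongr
          have := Real.exp_one_lt_d9
          have h2 : (Real.exp 1) ^ 2 ≤ 2.72 ^ 2 := by
            gcongr; linarith
          nlinarith
  have hlast : ∑ k ∈ Finset.Icc 1 (2 * m), (1 / 4 : ℝ) ^ k < 1 := by
    have : ∀ n : ℕ, ∑ k ∈ Finset.Icc 1 n, (1 / 4 : ℝ) ^ k ≤ 1 / 3 - (1 / 4) ^ n / 3 := by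
      intro n
      induction n with
      | zero => simp
      | succ n ih =>
        rw [Finset.sum_Icc_succ_top (by omega)]
        rw [pow_succ]; linarith
    have h := this (2 * m)
    have : (0 : ℝ) < (1 / 4) ^ (2 * m) := by positivity
    linarith
  have := hcount.trans (Finset.sum_le_sum hterm)
  rw [← Finset.sum_mul] at this
  nlinarith

/-! ### Bounds for averages of nearly additive functions -/

/-- Real-valued `1`-additivity on the algebra of all finite subsets of `Ω`. It is used for a finite
`Ω`, where this is the full power set. -/
def NearAdd {Ω : Type*} [DecidableEq Ω] (f : Finset Ω → ℝ) : Prop :=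
  ∀ A B, Disjoint A B → |f (A ∪ B) - f A - f B| ≤ 1

theorem NearAdd.empty {Ω : Type*} [DecidableEq Ω] {f : Finset Ω → ℝ} (hf : NearAdd f) :
    |f ∅| ≤ 1 := by
  have := hf ∅ ∅ (Finset.disjoint_empty_left _)
  rw [Finset.union_empty, abs_le] at this
  rw [abs_le]; constructor <;> linarith

theorem NearAdd.biUnion {Ω ι : Type*} [DecidableEq Ω] {f : Finset Ω → ℝ} (hf : NearAdd f)
    (A : ι → Finset Ω) (X : Finset ι)
    (hd : ∀ x ∈ X, ∀ y ∈ X, x ≠ y → Disjoint (A x) (A y)) :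
    |f (X.biUnion A) - ∑ x ∈ X, f (A x)| ≤ X.card + 1 := by
  classical
  induction X using Finset.induction_on with
  | empty => simpa using hf.empty
  | insert a X ha ih =>
    rw [Finset.biUnion_insert, Finset.sum_insert ha, Finset.card_insert_of_notMem ha]
    have h1 := ih fun x hx y hy => hd x (Finset.mem_insert_of_mem hx) y (Finset.mem_insert_of_mem hy)
    have h2 := hf (A a) (X.biUnion A) (by
      rw [Finset.disjoint_biUnion_right]
      intro x hx
      exact hd a (Finset.mem_insert_self _ _) x (Finset.mem_insert_of_mem hx)
        (fun h => ha (h ▸ hx)))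
    rw [abs_le] at *
    push_cast
    constructor <;> linarith

/-- The bound from concentrators: if at most `4m` sets cover each point at most `2m` times, then,
up to an error linear in `m`, they can be cut up and reassembled into `3m` sets. The sum of the
values of a nearly additive `f` with `|f| ≤ M` is therefore about `3mM`, not just `4mM`. -/
theorem NearAdd.abs_sum_le {Ω I : Type*} [DecidableEq Ω] [Fintype I]
    {f : Finset Ω → ℝ} (hf : NearAdd f) {M : ℝ} (hM : ∀ A, |f A| ≤ M)
    {m : ℕ} (hm : 0 < m) (hI : Fintype.card I ≤ 4 * m) (A : I → Finset Ω)
    (hA : ∀ ω, (Finset.univ.filter fun i => ω ∈ A i).card ≤ 2 * m) :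
    |∑ i, f (A i)| ≤ 3 * m * M + 104 * m := by
  classical
  obtain ⟨g₀, hg₀⟩ := exists_concentrator m hm
  obtain ⟨e⟩ : Nonempty (I ↪ Fin (4 * m)) :=
    Function.Embedding.nonempty_of_card_le (by simpa using hI)
  let g : I → Fin 12 → Fin (3 * m) := fun i => g₀ (e i)
  have hg : ∀ S : Finset I, S.card ≤ 2 * m →
      S.card ≤ (S.biUnion fun i => Finset.univ.image (g i)).card := by
    intro S hS
    have := hg₀ (S.map e) (by simpa using hS)
    rwa [Finset.card_map, Finset.map_eq_image, Finset.image_biUnion] at this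
  -- By the Hall marriage theorem, at each `ω` one can choose an edge at every `i` with `ω ∈ A i` so that
  -- the chosen edges end at distinct outputs.
  have hc : ∀ ω, ∃ c : I → Fin 12, ∀ i j, ω ∈ A i → ω ∈ A j → g i (c i) = g j (c j) → i = j := by
    intro ω
    let J := Finset.univ.filter fun i => ω ∈ A i
    obtain ⟨h, hinj, hmem⟩ := (Finset.all_card_le_biUnion_card_iff_exists_injective
      (fun i : J => Finset.univ.image (g i))).1 (by
        intro s
        have h1 : (s.map (Function.Embedding.subtype _)).card ≤ 2 * m := by
          refine le_trans (Finset.card_le_card ?_) (hA ω)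
          intro x hx
          rw [Finset.mem_map] at hx
          obtain ⟨y, _, rfl⟩ := hx
          exact y.2
        have := hg _ h1
        rwa [Finset.card_map, Finset.map_eq_image, Finset.image_biUnion] at this)
    have hex : ∀ i, ∃ c, ∀ hi : i ∈ J, g i c = h ⟨i, hi⟩ := by
      intro i
      by_cases hi : i ∈ J
      · obtain ⟨c, _, hc⟩ := Finset.mem_image.1 (hmem ⟨i, hi⟩)
        exact ⟨c, fun _ => hc⟩
      · exact ⟨0, fun h => absurd h hi⟩
    choose c hc using hex
    refine ⟨c, fun i j hi hj hij => ?_⟩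
    have hi' : i ∈ J := by simpa [J] using hi
    have hj' : j ∈ J := by simpa [J] using hj
    rw [hc i hi', hc j hj'] at hij
    simpa using hinj hij
  choose c hc using hc
  -- `P (i, k)` is the part of `A i` travelling along the `k`-th edge at `i`. The parts with fixed
  -- `i` partition `A i` (`hsplit`), and the parts arriving at a fixed output are disjoint (`hjoin`).
  let P : I × Fin 12 → Finset Ω := fun p => (A p.1).filter fun ω => c ω p.1 = p.2
  have hsplit : ∀ i, |f (A i) - ∑ k, f (P (i, k))| ≤ 13 := by
    intro i
    have h := hf.biUnion (fun k => P (i, k)) Finset.univ (by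
      intro x _ y _ hxy
      rw [Finset.disjoint_left]
      intro ω hx hy
      simp only [P, Finset.mem_filter] at hx hy
      exact hxy (hx.2.symm.trans hy.2))
    have h2 : Finset.univ.biUnion (fun k => P (i, k)) = A i := by
      ext ω; simp [P]
    rw [h2] at h
    simp only [Finset.card_univ, Fintype.card_fin] at h
    norm_num at h ⊢
    exact h
  have hjoin : ∀ j : Fin (3 * m), |∑ p ∈ Finset.univ.filter (fun p : I × Fin 12 => g p.1 p.2 = j), f (P p)|
      ≤ M + (Finset.univ.filter (fun p : I × Fin 12 => g p.1 p.2 = j)).card + 1 := by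
    intro j
    have h := hf.biUnion P (Finset.univ.filter (fun p : I × Fin 12 => g p.1 p.2 = j)) (by
      intro x hx y hy hxy
      simp only [Finset.mem_filter, Finset.mem_univ, true_and] at hx hy
      rw [Finset.disjoint_left]
      intro ω hωx hωy
      simp only [P, Finset.mem_filter] at hωx hωy
      have h1 := hc ω x.1 y.1 hωx.1 hωy.1 (by rw [hωx.2, hωy.2, hx, hy])
      exact hxy (Prod.ext h1 (by rw [← hωx.2, ← hωy.2, h1])))
    have h2 := hM ((Finset.univ.filter (fun p : I × Fin 12 => g p.1 p.2 = j)).biUnion P)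
    rw [abs_le] at *
    constructor <;> linarith
  have hs1 : |∑ i, f (A i) - ∑ p, f (P p)| ≤ 52 * m := by
    rw [Fintype.sum_prod_type, ← Finset.sum_sub_distrib]
    refine (Finset.abs_sum_le_sum_abs _ _).trans ?_
    refine (Finset.sum_le_card_nsmul _ _ _ fun i _ => hsplit i).trans ?_
    have : (Fintype.card I : ℝ) ≤ 4 * m := by exact_mod_cast hI
    simp only [Finset.card_univ, nsmul_eq_mul]
    linarith
  have hs2 : |∑ p, f (P p)| ≤ 3 * m * M + 52 * m := by
    rw [← Finset.sum_fiberwise Finset.univ (fun p : I × Fin 12 => g p.1 p.2)]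
    refine (Finset.abs_sum_le_sum_abs _ _).trans ?_
    refine (Finset.sum_le_sum fun j _ => hjoin j).trans ?_
    have h1 : ∑ j : Fin (3 * m), ((Finset.univ.filter (fun p : I × Fin 12 => g p.1 p.2 = j)).card : ℝ)
        = Fintype.card I * 12 := by
      rw [← Nat.cast_sum, ← Finset.card_eq_sum_card_fiberwise (fun _ _ => Finset.mem_coe.2 (Finset.mem_univ _))]
      simp
    rw [Finset.sum_add_distrib, Finset.sum_add_distrib, h1]
    have : (Fintype.card I : ℝ) ≤ 4 * m := by exact_mod_cast hI
    have hm0 : (0 : ℝ) ≤ m := by positivity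
    simp
    linarith
  rw [abs_le] at *
  constructor <;> linarith

/-- The convex form of `NearAdd.abs_sum_le`: repeat each `A` about `4 m * l A` times and let
`m → ∞`. -/
theorem NearAdd.abs_weighted_le {Ω : Type*} [DecidableEq Ω] [Fintype Ω]
    {f : Finset Ω → ℝ} (hf : NearAdd f) {M : ℝ} (hM : ∀ A, |f A| ≤ M)
    (l : Finset Ω → ℝ) (hl : ∀ A, 0 ≤ l A) (hl1 : ∑ A, l A = 1)
    (hcov : ∀ ω, ∑ A, (if ω ∈ A then l A else 0) ≤ 1 / 2) :
    |∑ A, l A * f A| ≤ 3 / 4 * M + 26 := by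
  have hstep : ∀ m : ℕ, 0 < m →
      |∑ A, ((⌊l A * (4 * m : ℝ)⌋₊ : ℝ) / (4 * m : ℝ)) * f A| ≤ 3 / 4 * M + 26 := by
    intro m hm
    have hm0 : (0 : ℝ) < m := by exact_mod_cast hm
    let n : Finset Ω → ℕ := fun A => ⌊l A * (4 * m : ℝ)⌋₊
    have hn : ∀ A, (n A : ℝ) ≤ l A * (4 * m) := fun A =>
      Nat.floor_le (mul_nonneg (hl A) (by positivity))
    have h := hf.abs_sum_le (I := Σ A : Finset Ω, Fin (n A)) hM hm (by
        rw [Fintype.card_sigma]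
        simp only [Fintype.card_fin]
        have : (∑ A, (n A : ℝ)) ≤ 4 * m := by
          refine (Finset.sum_le_sum fun A _ => hn A).trans ?_
          rw [← Finset.sum_mul, hl1, one_mul]
        exact_mod_cast this) (fun i => i.1) (by
        intro ω
        have h1 : (Finset.univ.filter fun i : Σ A : Finset Ω, Fin (n A) => ω ∈ i.1).card
            = ∑ A : Finset Ω, if ω ∈ A then n A else 0 := by
          rw [Finset.card_filter, Fintype.sum_sigma]
          refine Finset.sum_congr rfl fun A _ => ?_
          by_cases hω : ω ∈ A <;> simp [hω]
        rw [h1]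
        have : (∑ A : Finset Ω, if ω ∈ A then (n A : ℝ) else 0) ≤ 2 * m := by
          calc (∑ A : Finset Ω, if ω ∈ A then (n A : ℝ) else 0)
              ≤ ∑ A : Finset Ω, (if ω ∈ A then l A else 0) * (4 * m) := by
                refine Finset.sum_le_sum fun A _ => ?_
                split_ifs
                · exact hn A
                · simp
            _ ≤ 1 / 2 * (4 * m) := by
                rw [← Finset.sum_mul]
                exact mul_le_mul_of_nonneg_right (hcov ω) (by positivity)
            _ = 2 * m := by ring
        exact_mod_cast this)
    rw [Fintype.sum_sigma] at h
    simp only [Finset.sum_const, Finset.card_univ, Fintype.card_fin, nsmul_eq_mul] at h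
    have h2 : ∑ A, ((n A : ℝ) / (4 * m : ℝ)) * f A = (∑ A, (n A : ℝ) * f A) / (4 * m) := by
      rw [Finset.sum_div]
      exact Finset.sum_congr rfl fun A _ => by ring
    change |∑ A, ((n A : ℝ) / (4 * m : ℝ)) * f A| ≤ _
    rw [h2, abs_div, abs_of_pos (by positivity : (0 : ℝ) < 4 * m), div_le_iff₀ (by positivity)]
    linarith
  have hlim : Filter.Tendsto
      (fun m : ℕ => |∑ A, ((⌊l A * (4 * m : ℝ)⌋₊ : ℝ) / (4 * m : ℝ)) * f A|)
      Filter.atTop (nhds |∑ A, l A * f A|) := by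
    refine Filter.Tendsto.abs (tendsto_finsetSum _ fun A _ => Filter.Tendsto.mul_const _ ?_)
    exact (tendsto_nat_floor_mul_div_atTop (hl A)).comp
      (tendsto_natCast_atTop_atTop.const_mul_atTop (by norm_num : (0 : ℝ) < 4))
  refine le_of_tendsto hlim ?_
  filter_upwards [Filter.eventually_gt_atTop 0] with m hm using hstep m hm

/-! ### The Kalton–Roberts theorem for finite power sets -/

theorem NearAdd.sub_sum {Ω : Type*} [DecidableEq Ω] {f : Finset Ω → ℝ} (hf : NearAdd f)
    (w : Ω → ℝ) : NearAdd fun A => f A - ∑ ω ∈ A, w ω := by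
  intro A B h
  have := hf A B h
  simp only [Finset.sum_union h]
  rw [abs_le] at *
  constructor <;> linarith

theorem NearAdd.abs_compl {Ω : Type*} [DecidableEq Ω] [Fintype Ω] {f : Finset Ω → ℝ}
    (hf : NearAdd f) (h0 : f Finset.univ = 0) (A : Finset Ω) : |f A + f Aᶜ| ≤ 1 := by
  have := hf A Aᶜ disjoint_compl_right
  rw [Finset.union_compl, h0] at this
  rw [abs_le] at *
  constructor <;> linarith

/-- For probability weights covering all points equally, the average of `f` is at least `-(3M/4 + 27)`.
If the common coverage exceeds `1/2`, the bound is applied to the complements. -/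
theorem NearAdd.balanced_ge {Ω : Type*} [DecidableEq Ω] [Fintype Ω]
    {f : Finset Ω → ℝ} (hf : NearAdd f) (h0 : f Finset.univ = 0) {M : ℝ} (hM : ∀ A, |f A| ≤ M)
    (l : Finset Ω → ℝ) (hl : ∀ A, 0 ≤ l A) (hl1 : ∑ A, l A = 1)
    (hbal : ∀ ω ω', ∑ A, (if ω ∈ A then l A else 0) = ∑ A, (if ω' ∈ A then l A else 0)) :
    -(3 / 4 * M + 27) ≤ ∑ A, l A * f A := by
  by_cases hcov : ∀ ω, ∑ A, (if ω ∈ A then l A else 0) ≤ 1 / 2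
  · have := hf.abs_weighted_le hM l hl hl1 hcov
    rw [abs_le] at this
    linarith
  · push Not at hcov
    obtain ⟨ω₀, hω₀⟩ := hcov
    have hre : ∀ F : Finset Ω → ℝ, ∑ A, F Aᶜ = ∑ A, F A := fun F =>
      Fintype.sum_equiv (Equiv.mk compl compl compl_compl compl_compl) _ _ fun _ => rfl
    have h := hf.abs_weighted_le hM (fun A => l Aᶜ) (fun A => hl _) (by rw [hre, hl1]) (by
      intro ω
      have h1 : ∑ A, (if ω ∈ A then l Aᶜ else 0) = ∑ A, (if ω ∈ A then 0 else l A) := by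
        rw [← hre]
        refine Finset.sum_congr rfl fun A _ => ?_
        by_cases hω : ω ∈ A <;> simp [hω]
      have h2 : ∑ A, (if ω ∈ A then 0 else l A) + ∑ A, (if ω ∈ A then l A else 0) = 1 := by
        rw [← Finset.sum_add_distrib, ← hl1]
        refine Finset.sum_congr rfl fun A _ => ?_
        by_cases hω : ω ∈ A <;> simp [hω]
      rw [h1]
      rw [hbal ω₀ ω] at hω₀
      linarith)
    have h3 : ∑ A, l Aᶜ * f A = ∑ A, l A * f Aᶜ := by
      rw [← hre]
      simp
    rw [h3] at h
    have h4 : -1 ≤ ∑ A, l A * f A + ∑ A, l A * f Aᶜ := by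
      rw [← Finset.sum_add_distrib, ← hl1, ← Finset.sum_neg_distrib]
      refine Finset.sum_le_sum fun A _ => ?_
      have := hf.abs_compl h0 A
      rw [abs_le] at this
      nlinarith [hl A]
    rw [abs_le] at h
    linarith

/-- Linear duality: if all averages of `f` over balanced probability weights exceed `-K`, then some
signed measure of total mass `0` is dominated by `f + K`. It comes from a Hahn–Banach separation
in `ℝ^Ω × ℝ` of the set of all (coverage, average) pairs from the pairs with constant coverage
and average at most `-K`. -/
theorem exists_weight_le {Ω : Type*} [DecidableEq Ω] [Fintype Ω]
    (f : Finset Ω → ℝ) (K : ℝ)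
    (hK : ∀ l : Finset Ω → ℝ, (∀ A, 0 ≤ l A) → ∑ A, l A = 1 →
      (∀ ω ω', ∑ A, (if ω ∈ A then l A else 0) = ∑ A, (if ω' ∈ A then l A else 0)) →
      -K < ∑ A, l A * f A) :
    ∃ w : Ω → ℝ, ∑ ω, w ω = 0 ∧ ∀ A, ∑ ω ∈ A, w ω ≤ f A + K := by
  let L : (Finset Ω → ℝ) →ₗ[ℝ] (Ω → ℝ) × ℝ :=
    { toFun := fun l => (fun ω => ∑ A, (if ω ∈ A then l A else 0), ∑ A, l A * f A)
      map_add' := by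
        intro x y
        ext ω
        · simp only [Pi.add_apply, Prod.fst_add]
          rw [← Finset.sum_add_distrib]
          refine Finset.sum_congr rfl fun A _ => ?_
          split_ifs <;> simp
        · simp [add_mul, Finset.sum_add_distrib]
      map_smul' := by
        intro c x
        ext ω
        · simp [Finset.mul_sum]
        · simp [Finset.mul_sum, mul_assoc] }
  have hLc : Continuous L := L.continuous_of_finiteDimensional
  let D : Set ((Ω → ℝ) × ℝ) := {z | (∀ a b, z.1 a = z.1 b) ∧ z.2 ≤ -K}
  have hDconv : Convex ℝ D := by
    intro x hx y hy a b ha hb hab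
    refine ⟨fun i j => ?_, ?_⟩
    · simp [hx.1 i j, hy.1 i j]
    · have h1 := hx.2
      have h2 := hy.2
      simp only [Prod.snd_add, Prod.smul_snd, smul_eq_mul]
      have : -K = a * -K + b * -K := by rw [← add_mul, hab, one_mul]
      rw [this]
      gcongr
  have hDcl : IsClosed D := by
    have : D = (⋂ a, ⋂ b, {z : (Ω → ℝ) × ℝ | z.1 a = z.1 b}) ∩ {z | z.2 ≤ -K} := by
      ext z; simp [D]
    rw [this]
    refine IsClosed.inter (isClosed_iInter fun a => isClosed_iInter fun b =>
      isClosed_eq (by fun_prop) (by fun_prop)) (isClosed_le (by fun_prop) (by fun_prop))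
  obtain ⟨ℓ, u, v, hC, huv, hD⟩ := geometric_hahn_banach_compact_closed
    ((convex_stdSimplex ℝ (Finset Ω)).linear_image L)
    ((isCompact_stdSimplex ℝ (Finset Ω)).image hLc) hDconv hDcl (by
      rw [Set.disjoint_left]
      rintro _ ⟨l, hl, rfl⟩ hz
      exact absurd hz.2 (not_le.2 (hK l hl.1 hl.2 hz.1)))
  let c : ℝ := ℓ (0, 1)
  let w : Ω → ℝ := fun ω => ℓ (Pi.single ω 1, 0)
  have hℓ : ∀ (x : Ω → ℝ) (y : ℝ), ℓ (x, y) = ∑ ω, x ω * w ω + y * c := by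
    intro x y
    have h1 : (x, y) = ∑ ω, x ω • ((Pi.single ω 1, 0) : (Ω → ℝ) × ℝ) + y • ((0, 1) : (Ω → ℝ) × ℝ) := by
      ext ω
      · simp [Finset.sum_apply, Pi.single_apply, Prod.fst_sum]
      · simp [Prod.snd_sum]
    rw [h1, map_add, map_sum]
    simp only [map_smul, smul_eq_mul, w, c]
  have hCA : ∀ A, ∑ ω ∈ A, w ω + f A * c < u := by
    intro A
    have h := hC _ ⟨Pi.single A 1, single_mem_stdSimplex ℝ A, rfl⟩
    change ℓ (_, _) < u at h
    rw [hℓ] at h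
    have h1 : ∀ ω, ∑ B, (if ω ∈ B then (Pi.single A 1 : Finset Ω → ℝ) B else 0)
        = if ω ∈ A then 1 else 0 := by
      intro ω
      rw [Finset.sum_eq_single A (fun B _ hB => by simp [hB]) (by simp)]
      simp
    simp only [h1] at h
    simpa [Pi.single_apply] using h
  have hDt : ∀ t y : ℝ, y ≤ -K → v < t * ∑ ω, w ω + y * c := by
    intro t y hy
    have h := hD (fun _ => t, y) ⟨fun _ _ => rfl, hy⟩
    rwa [hℓ, ← Finset.mul_sum] at h
  -- The separating functional is bounded below on a set containing the line of constant first
  -- coordinates, so it vanishes on constants.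
  have hw0 : ∑ ω, w ω = 0 := by
    by_contra hne
    have h := hDt ((v - (-K) * c) / ∑ ω, w ω) (-K) le_rfl
    rw [div_mul_cancel₀ _ hne] at h
    linarith
  have hc0 : c < 0 := by
    have hempty := hCA ∅
    simp only [Finset.sum_empty, zero_add] at hempty
    by_contra hc
    push Not at hc
    have h := hDt 0 (min (-K) (f ∅)) (min_le_left _ _)
    have h2 : min (-K) (f ∅) * c ≤ f ∅ * c := mul_le_mul_of_nonneg_right (min_le_right _ _) hc
    linarith
  refine ⟨fun ω => w ω / (-c), by rw [← Finset.sum_div, hw0, zero_div], fun A => ?_⟩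
  rw [← Finset.sum_div, div_le_iff₀ (by linarith)]
  have h1 := hCA A
  have h2 := hDt 0 (-K) le_rfl
  nlinarith

/-- One improvement step: a bound `M` for `f` becomes `3M/4 + 29` after subtracting a suitable
measure of total mass `0`. -/
theorem NearAdd.improve {Ω : Type*} [DecidableEq Ω] [Fintype Ω]
    {f : Finset Ω → ℝ} (hf : NearAdd f) (h0 : f Finset.univ = 0) {M : ℝ} (hM : ∀ A, |f A| ≤ M) :
    ∃ w : Ω → ℝ, ∑ ω, w ω = 0 ∧ ∀ A, |f A - ∑ ω ∈ A, w ω| ≤ 3 / 4 * M + 29 := by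
  obtain ⟨w, hw0, hw⟩ := exists_weight_le f (3 / 4 * M + 28) (by
    intro l hl hl1 hbal
    have := hf.balanced_ge h0 hM l hl hl1 hbal
    linarith)
  refine ⟨w, hw0, fun A => ?_⟩
  have h1 := hw A
  have h2 := hw Aᶜ
  have h3 := hf.abs_compl h0 A
  have h4 := Finset.sum_add_sum_compl A w
  rw [abs_le] at *
  constructor <;> linarith

/-- The Kalton–Roberts theorem for finite power sets. Iterating `NearAdd.improve` drives the bound
to the fixed point `116` of `M ↦ 3M/4 + 29`. -/
theorem NearAdd.exists_weight {Ω : Type*} [DecidableEq Ω] [Fintype Ω]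
    {f : Finset Ω → ℝ} (hf : NearAdd f) :
    ∃ w : Ω → ℝ, ∀ A, |f A - ∑ ω ∈ A, w ω| ≤ 117 := by
  rcases isEmpty_or_nonempty Ω with hΩ | ⟨⟨p⟩⟩
  · refine ⟨0, fun A => ?_⟩
    have := hf.empty
    rw [Finset.eq_empty_of_isEmpty A]
    simp only [Finset.sum_empty, sub_zero]
    linarith
  -- The iteration starts from the point mass `f univ` at `p`, which makes the total mass right.
  obtain ⟨M₀, hM₀⟩ : ∃ M₀, ∀ A, |f A - ∑ ω ∈ A, Pi.single (M := fun _ => ℝ) p (f Finset.univ) ω| ≤ M₀ := by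
    refine ⟨∑ B, |f B - ∑ ω ∈ B, Pi.single (M := fun _ => ℝ) p (f Finset.univ) ω|, fun A => ?_⟩
    exact Finset.single_le_sum
      (f := fun B => |f B - ∑ ω ∈ B, Pi.single (M := fun _ => ℝ) p (f Finset.univ) ω|)
      (fun _ _ => abs_nonneg _) (Finset.mem_univ A)
  have hiter : ∀ n : ℕ, ∃ w : Ω → ℝ, ∑ ω, w ω = f Finset.univ ∧
      ∀ A, |f A - ∑ ω ∈ A, w ω| ≤ 116 + (3 / 4) ^ n * (M₀ - 116) := by
    intro n
    induction n with
    | zero =>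
      refine ⟨Pi.single p (f Finset.univ), by simp, fun A => ?_⟩
      simpa using hM₀ A
    | succ n ih =>
      obtain ⟨w, hw0, hw⟩ := ih
      obtain ⟨w', hw0', hw'⟩ := (hf.sub_sum w).improve (by rw [hw0, sub_self]) hw
      refine ⟨fun ω => w ω + w' ω, by rw [Finset.sum_add_distrib, hw0, hw0', add_zero], fun A => ?_⟩
      rw [Finset.sum_add_distrib, ← sub_sub]
      refine (hw' A).trans (le_of_eq ?_)
      rw [pow_succ]; ring
  have hlim : Filter.Tendsto (fun n : ℕ => 116 + (3 / 4 : ℝ) ^ n * (M₀ - 116)) Filter.atTop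
      (nhds (116 + 0 * (M₀ - 116))) :=
    ((_root_.tendsto_pow_atTop_nhds_zero_of_lt_one (by norm_num) (by norm_num)).mul_const _).const_add _
  obtain ⟨n, hn⟩ := (hlim.eventually (gt_mem_nhds (by norm_num : 116 + 0 * (M₀ - 116) < 117))).exists
  obtain ⟨w, _, hw⟩ := hiter n
  exact ⟨w, fun A => (hw A).trans hn.le⟩

/-! ### The relative Kalton–Roberts theorem -/

/-- The sets determined by membership in the elements of `T`, i.e. the preimages of arbitrary sets
under `ω ↦ (B ↦ ω ∈ B)`. For a finite `T` this is the set algebra generated by `T`. -/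
def cylAlg {Ω : Type*} (T : Set (Set Ω)) : Set (Set Ω) :=
  Set.range fun S : Set (T → Prop) => {ω | (fun B : T => ω ∈ B.1) ∈ S}

theorem isSetAlg_cylAlg {Ω : Type*} (T : Set (Set Ω)) : IsSetAlg (cylAlg T) := by
  refine ⟨⟨∅, by simp⟩, ?_, ?_⟩
  · rintro _ ⟨S, rfl⟩
    exact ⟨Sᶜ, rfl⟩
  · rintro _ ⟨S, rfl⟩ _ ⟨S', rfl⟩
    exact ⟨S ∪ S', rfl⟩

theorem subset_cylAlg {Ω : Type*} (T : Set (Set Ω)) : T ⊆ cylAlg T := fun B hB =>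
  ⟨{p | p ⟨B, hB⟩}, rfl⟩

theorem cylAlg_mono {Ω : Type*} {T T' : Set (Set Ω)} (h : T ⊆ T') : cylAlg T ⊆ cylAlg T' := by
  rintro _ ⟨S, rfl⟩
  exact ⟨{p | (fun B : T => p ⟨B.1, h B.2⟩) ∈ S}, rfl⟩

theorem finite_cylAlg {Ω : Type*} {T : Set (Set Ω)} (h : T.Finite) : (cylAlg T).Finite := by
  have := h.to_subtype
  exact Set.finite_range _

theorem IsSetAlg.isSetAlgebra {Ω : Type*} {F : Set (Set Ω)} (hF : IsSetAlg F) :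
    MeasureTheory.IsSetAlgebra F :=
  ⟨hF.1, fun s hs => hF.2.1 s hs, fun s t hs ht => hF.2.2 s hs t ht⟩

theorem cylAlg_subset {Ω : Type*} {T F : Set (Set Ω)} (h : T.Finite) (hF : IsSetAlg F)
    (hTF : T ⊆ F) : cylAlg T ⊆ F := by
  classical
  have := h.to_subtype
  have := Fintype.ofFinite T
  rintro _ ⟨S, rfl⟩
  have hA := hF.isSetAlgebra
  have hatom : ∀ p : T → Prop, {ω | (fun B : T => ω ∈ B.1) = p} ∈ F := by
    intro p
    have h1 : {ω | (fun B : T => ω ∈ B.1) = p}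
        = ⋂ B ∈ (Finset.univ : Finset T), if p B then B.1 else B.1ᶜ := by
      ext ω
      simp only [Set.mem_ofPred_eq, funext_iff, Set.mem_iInter, Finset.mem_univ, true_imp_iff]
      refine forall_congr' fun B => ?_
      by_cases hp : p B <;> simp [hp]
    rw [h1]
    refine hA.biInter_mem _ fun B _ => ?_
    split_ifs
    · exact hTF B.2
    · exact hF.2.1 _ (hTF B.2)
  have h2 : {ω | (fun B : T => ω ∈ B.1) ∈ S}
      = ⋃ p ∈ (Finset.univ.filter fun p => p ∈ S), {ω | (fun B : T => ω ∈ B.1) = p} := by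
    ext ω; simp
  change {ω | (fun B : T => ω ∈ B.1) ∈ S} ∈ F
  rw [h2]
  exact hA.biUnion_mem _ fun p _ => hatom p

/-- The Kalton–Roberts theorem for finite set algebras, transferred from the power set of
`F → Prop` along `ω ↦ (B ↦ ω ∈ B)`. -/
theorem exists_measure_of_finite {Ω : Type*} {F : Set (Set Ω)} (hF : IsSetAlg F) (hfin : F.Finite)
    {ν : Set Ω → ℝ} (hν : OneAdd F ν) :
    ∃ μ : Set Ω → ℝ, VectMeas F μ ∧ ∀ A ∈ F, |ν A - μ A| ≤ 117 := by
  classical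
  have := hfin.to_subtype
  have := Fintype.ofFinite F
  let π : Ω → (F → Prop) := fun ω B => ω ∈ B.1
  have hmem : ∀ S : Finset (F → Prop), π ⁻¹' S ∈ F := fun S =>
    cylAlg_subset hfin hF subset_rfl ⟨(S : Set (F → Prop)), rfl⟩
  have hf : NearAdd fun S : Finset (F → Prop) => ν (π ⁻¹' S) := by
    intro A B hAB
    simp only [Finset.coe_union, Set.preimage_union]
    exact hν _ (hmem A) _ (hmem B) (Disjoint.preimage _ (Finset.disjoint_coe.2 hAB))
  obtain ⟨w, hw⟩ := hf.exists_weight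
  have hπ : ∀ A ∈ F, ∀ ω, π ω ∈ π '' A ↔ ω ∈ A := by
    intro A hA ω
    refine ⟨?_, fun h => ⟨ω, h, rfl⟩⟩
    rintro ⟨ω', hω', h⟩
    exact (iff_of_eq (congrFun h ⟨A, hA⟩)).1 hω'
  refine ⟨fun A => ∑ p ∈ Finset.univ.filter (fun p => p ∈ π '' A), w p, ?_, ?_⟩
  · intro A hA B hB hAB
    dsimp only
    rw [← Finset.sum_union]
    · refine Finset.sum_congr ?_ fun _ _ => rfl
      ext p
      simp only [Set.image_union, Finset.mem_filter, Finset.mem_univ, true_and, Finset.mem_union,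
        Set.mem_union]
    · rw [Finset.disjoint_left]
      intro p hp hq
      simp only [Finset.mem_filter, Finset.mem_univ, true_and] at hp hq
      obtain ⟨ω, hω, rfl⟩ := hp
      exact Set.disjoint_left.1 hAB hω ((hπ B hB ω).1 hq)
  · intro A hA
    have h := hw (Finset.univ.filter (fun p => p ∈ π '' A))
    have h2 : π ⁻¹' ((Finset.univ.filter (fun p => p ∈ π '' A) : Finset (F → Prop)) : Set (F → Prop)) = A := by
      ext ω
      simp only [Set.mem_preimage, Finset.mem_coe, Finset.mem_filter, Finset.mem_univ, true_and]
      exact hπ A hA ω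
    rwa [h2] at h

/-- The relative Kalton–Roberts theorem for finite set algebras: if `|ν| ≤ 1` on a subalgebra `G`,
the approximating measure can be taken to vanish on `G`. Here `G` may also be empty. -/
theorem exists_measure_vanishing_of_finite {Ω : Type*} {F G : Set (Set Ω)} (hF : IsSetAlg F)
    (hfin : F.Finite) (hGF : G ⊆ F) (hGc : ∀ A ∈ G, Aᶜ ∈ G) (hGu : ∀ A ∈ G, ∀ B ∈ G, A ∪ B ∈ G)
    {ν : Set Ω → ℝ} (hν : OneAdd F ν) (hνG : ∀ A ∈ G, |ν A| ≤ 1) :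
    ∃ μ : Set Ω → ℝ, VectMeas F μ ∧ (∀ A ∈ F, |ν A - μ A| ≤ 235) ∧ ∀ A ∈ G, μ A = 0 := by
  obtain ⟨μ, hμ, hb⟩ := exists_measure_of_finite hF hfin hν
  rcases G.eq_empty_or_nonempty with rfl | ⟨A₀, hA₀⟩
  · exact ⟨μ, hμ, fun A hA => (hb A hA).trans (by norm_num), fun A hA => absurd hA (by simp)⟩
  have hG : IsSetAlg G := by
    refine ⟨?_, hGc, hGu⟩
    have := hGc _ (hGu _ hA₀ _ (hGc _ hA₀))
    simpa using this
  let π : Ω → (G → Prop) := fun ω B => ω ∈ B.1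
  -- `ρ` sends each point to a representative of its `G`-atom, so `ρ ⁻¹' A ∈ G` for every `A`, and
  -- `ρ ⁻¹' A = A` for `A ∈ G`; the measure `A ↦ μ (ρ ⁻¹' A)` is subtracted from `μ`.
  let ρ : Ω → Ω := fun ω => (Quotient.mk (Setoid.ker π) ω).out
  have hρ : ∀ ω, π (ρ ω) = π ω := fun ω => Quotient.mk_out (s := Setoid.ker π) ω
  have hρG : ∀ A : Set Ω, ρ ⁻¹' A ∈ G := by
    intro A
    refine cylAlg_subset (hfin.subset hGF) hG subset_rfl ⟨π '' (ρ ⁻¹' A), ?_⟩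
    ext ω
    constructor
    · rintro ⟨ω', hω', h⟩
      have : ρ ω' = ρ ω := congrArg Quotient.out (Quotient.sound (s := Setoid.ker π) h)
      change ρ ω ∈ A
      rw [← this]; exact hω'
    · intro h
      exact ⟨ω, h, rfl⟩
  refine ⟨fun A => μ A - μ (ρ ⁻¹' A), ?_, ?_, ?_⟩
  · intro A hA B hB hAB
    simp only [Set.preimage_union]
    rw [hμ A hA B hB hAB, hμ _ (hGF (hρG A)) _ (hGF (hρG B)) (hAB.preimage _)]
    ring
  · intro A hA
    have h1 := hb A hA
    have h2 := hb _ (hGF (hρG A))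
    have h3 := hνG _ (hρG A)
    dsimp only
    rw [abs_le] at *
    constructor <;> linarith
  · intro A hA
    have : ρ ⁻¹' A = A := by
      ext ω
      exact iff_of_eq (congrFun (hρ ω) ⟨A, hA⟩)
    simp [this]

/-- The relative Kalton–Roberts theorem for arbitrary set algebras, by an ultrafilter limit over the
finite subalgebras. -/
theorem exists_measure_vanishing {Ω : Type*} {F G : Set (Set Ω)} (hF : IsSetAlg F)
    (hGF : G ⊆ F) (hGc : ∀ A ∈ G, Aᶜ ∈ G) (hGu : ∀ A ∈ G, ∀ B ∈ G, A ∪ B ∈ G)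
    {ν : Set Ω → ℝ} (hν : OneAdd F ν) (hνG : ∀ A ∈ G, |ν A| ≤ 1) :
    ∃ μ : Set Ω → ℝ, VectMeas F μ ∧ (∀ A ∈ F, |ν A - μ A| ≤ 235) ∧ ∀ A ∈ G, μ A = 0 := by
  classical
  let 𝒯 : Finset F → Set (Set Ω) := fun T => Subtype.val '' (T : Set F)
  have h𝒯f : ∀ T, (𝒯 T).Finite := fun T => T.finite_toSet.image _
  have h𝒯F : ∀ T, cylAlg (𝒯 T) ⊆ F := fun T => cylAlg_subset (h𝒯f T) hF (by
    rintro _ ⟨B, _, rfl⟩; exact B.2)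
  have hex : ∀ T : Finset F, ∃ μ : Set Ω → ℝ, VectMeas (cylAlg (𝒯 T)) μ ∧
      (∀ A ∈ cylAlg (𝒯 T), |ν A - μ A| ≤ 235) ∧ ∀ A ∈ G ∩ cylAlg (𝒯 T), μ A = 0 := by
    intro T
    have hT := isSetAlg_cylAlg (𝒯 T)
    exact exists_measure_vanishing_of_finite hT (finite_cylAlg (h𝒯f T)) Set.inter_subset_right
      (fun A hA => ⟨hGc A hA.1, hT.2.1 A hA.2⟩)
      (fun A hA B hB => ⟨hGu A hA.1 B hB.1, hT.2.2 A hA.2 B hB.2⟩)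
      (fun A hA B hB => hν A (h𝒯F T hA) B (h𝒯F T hB)) (fun A hA => hνG A hA.1)
  choose m hm hmb hm0 using hex
  let U : Ultrafilter (Finset F) := Ultrafilter.of Filter.atTop
  have hev : ∀ A ∈ F, ∀ᶠ T in (U : Filter (Finset F)), A ∈ cylAlg (𝒯 T) := by
    intro A hA
    refine Ultrafilter.of_le _ ?_
    filter_upwards [Filter.eventually_ge_atTop ({⟨A, hA⟩} : Finset F)] with T hT
    exact subset_cylAlg _ ⟨⟨A, hA⟩, hT (Finset.mem_singleton_self _), rfl⟩
  have hlim : ∀ A, ∃ x : ℝ, A ∈ F → x ∈ Set.Icc (ν A - 235) (ν A + 235) ∧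
      Filter.Tendsto (fun T => m T A) U (nhds x) := by
    intro A
    by_cases hA : A ∈ F
    · obtain ⟨x, hx, hlx⟩ := (isCompact_Icc (a := ν A - 235) (b := ν A + 235)).ultrafilter_le_nhds'
        (U.map fun T => m T A) (by
          rw [Ultrafilter.mem_map]
          filter_upwards [hev A hA] with T hT
          have := hmb T A hT
          rw [abs_le] at this
          constructor <;> linarith)
      exact ⟨x, fun _ => ⟨hx, hlx⟩⟩
    · exact ⟨0, fun h => absurd h hA⟩
  choose μ hμ using hlim
  refine ⟨μ, ?_, ?_, ?_⟩
  · intro A hA B hB hAB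
    refine tendsto_nhds_unique (hμ _ (hF.2.2 A hA B hB)).2
      (((hμ A hA).2.add (hμ B hB).2).congr' ?_)
    filter_upwards [hev A hA, hev B hB] with T hTA hTB
    exact (hm T A hTA B hTB hAB).symm
  · intro A hA
    have := (hμ A hA).1
    rw [abs_le]
    constructor <;> linarith [this.1, this.2]
  · intro A hA
    refine tendsto_nhds_unique (hμ _ (hGF hA)).2 (tendsto_const_nhds.congr' ?_)
    filter_upwards [hev A (hGF hA)] with T hT
    exact (hm0 T A ⟨hA, hT⟩).symm

/-! ### Algebras of cardinality at most the cofinality -/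

theorem mk_iUnion_lt_of_lt_cof {Γ ι : Type} [Infinite Γ] {f : ι → Set Γ}
    (hι : #ι < (#Γ).ord.cof) (hf : ∀ i, #(f i) < #Γ) : #(⋃ i, f i) < #Γ := by
  refine (mk_iUnion_le f).trans_lt (mul_lt_of_lt (aleph0_le_mk Γ) ?_ ?_)
  · exact hι.trans_le (by simpa using Ordinal.cof_le_card (#Γ).ord)
  · exact iSup_lt_of_lt_cof_ord hι hf

theorem aleph0_le_cof_ord (Γ : Type) [Infinite Γ] : ℵ₀ ≤ (#Γ).ord.cof :=
  Ordinal.aleph0_le_cof_iff.2 (Ordinal.one_lt_cof_iff.2 (isSuccLimit_ord (aleph0_le_mk Γ)))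

/-- `mZero Γ` is defined as a span; its elements themselves satisfy the smallness condition, because
that condition already defines a linear subspace. -/
theorem mk_lt_of_mem_mZero {Γ : Type} [Infinite Γ] {x : lp (fun _ : Γ => ℝ) ⊤} (hx : x ∈ mZero Γ) :
    ∀ ε : ℝ, 0 < ε → #{γ : Γ | ε ≤ |x γ|} < #Γ := by
  induction hx using Submodule.span_induction with
  | mem x h => exact h
  | zero =>
    intro ε hε
    have : {γ : Γ | ε ≤ |(0 : lp (fun _ : Γ => ℝ) ⊤) γ|} = ∅ := by
      ext γ; simpa using hε
    rw [this]
    simpa using (mk_ne_zero Γ).bot_lt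
  | add x y _ _ hx hy =>
    intro ε hε
    have hsub : {γ : Γ | ε ≤ |(x + y) γ|} ⊆ {γ | ε / 2 ≤ |x γ|} ∪ {γ | ε / 2 ≤ |y γ|} := by
      intro γ hγ
      change ε ≤ |x γ + y γ| at hγ
      change ε / 2 ≤ |x γ| ∨ ε / 2 ≤ |y γ|
      by_contra! hcon
      have := abs_add_le (x γ) (y γ)
      linarith
    exact (mk_le_mk_of_subset hsub).trans_lt ((mk_union_le _ _).trans_lt
      (add_lt_of_lt (aleph0_le_mk Γ) (hx _ (half_pos hε)) (hy _ (half_pos hε))))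
  | smul c x _ hx =>
    intro ε hε
    have hsub : {γ : Γ | ε ≤ |(c • x) γ|} ⊆ {γ | ε / (|c| + 1) ≤ |x γ|} := by
      intro γ hγ
      change ε ≤ |c * x γ| at hγ
      change ε / (|c| + 1) ≤ |x γ|
      rw [div_le_iff₀ (by positivity)]
      rw [abs_mul] at hγ
      nlinarith [abs_nonneg (x γ)]
    exact (mk_le_mk_of_subset hsub).trans_lt (hx _ (by positivity))

theorem exists_mZero_eq {Γ : Type} (h : Γ → ℝ) (C : ℝ) (hC : ∀ γ, |h γ| ≤ C)
    (hs : #{γ | h γ ≠ 0} < #Γ) : ∃ x : mZero Γ, ∀ γ, x.1 γ = h γ := by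
  have hmem : Memℓp (E := fun _ : Γ => ℝ) h ⊤ := memℓp_infty ⟨C, by
    rintro _ ⟨γ, rfl⟩; exact hC γ⟩
  refine ⟨⟨⟨h, hmem⟩, Submodule.subset_span ?_⟩, fun γ => rfl⟩
  intro ε hε
  refine (mk_le_mk_of_subset ?_).trans_lt hs
  intro γ hγ h0
  change ε ≤ |h γ| at hγ
  rw [h0, abs_zero] at hγ
  linarith

theorem abs_apply_le_norm {Γ : Type} (x : mZero Γ) (γ : Γ) : |x.1 γ| ≤ ‖x‖ :=
  lp.norm_apply_le_norm (by simp) x.1 γ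

theorem mZero_norm_le {Γ : Type} {x : mZero Γ} {C : ℝ} (hC : 0 ≤ C) (h : ∀ γ, |x.1 γ| ≤ C) :
    ‖x‖ ≤ C := lp.norm_le_of_forall_le (f := x.1) hC h

/-- The set algebra generated by `I`, as the union of the algebras generated by the finite subsets
of `I`. -/
def genAlg {Ω : Type} (I : Set (Set Ω)) : Set (Set Ω) :=
  {A | ∃ T : Set (Set Ω), T.Finite ∧ T ⊆ I ∧ A ∈ cylAlg T}

theorem subset_genAlg {Ω : Type} (I : Set (Set Ω)) : I ⊆ genAlg I := fun A hA =>
  ⟨{A}, Set.finite_singleton A, by simpa using hA, subset_cylAlg _ rfl⟩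

theorem genAlg_mono {Ω : Type} {I I' : Set (Set Ω)} (h : I ⊆ I') : genAlg I ⊆ genAlg I' := by
  rintro A ⟨T, hT, hTI, hA⟩
  exact ⟨T, hT, hTI.trans h, hA⟩

theorem genAlg_subset {Ω : Type} {I F : Set (Set Ω)} (hF : IsSetAlg F) (h : I ⊆ F) :
    genAlg I ⊆ F := by
  rintro A ⟨T, hT, hTI, hA⟩
  exact cylAlg_subset hT hF (hTI.trans h) hA

theorem compl_mem_genAlg {Ω : Type} {I : Set (Set Ω)} {A : Set Ω} (hA : A ∈ genAlg I) :
    Aᶜ ∈ genAlg I := by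
  obtain ⟨T, hT, hTI, hA⟩ := hA
  exact ⟨T, hT, hTI, (isSetAlg_cylAlg T).2.1 A hA⟩

theorem union_mem_genAlg {Ω : Type} {I : Set (Set Ω)} {A B : Set Ω} (hA : A ∈ genAlg I)
    (hB : B ∈ genAlg I) : A ∪ B ∈ genAlg I := by
  obtain ⟨T, hT, hTI, hA⟩ := hA
  obtain ⟨T', hT', hTI', hB⟩ := hB
  exact ⟨T ∪ T', hT.union hT', Set.union_subset hTI hTI', (isSetAlg_cylAlg _).2.2 A
    (cylAlg_mono Set.subset_union_left hA) B (cylAlg_mono Set.subset_union_right hB)⟩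

theorem mk_genAlg_lt {Ω : Type} {I : Set (Set Ω)} {c : Cardinal} (hc : ℵ₀ ≤ c) (hI : #I < c) :
    #(genAlg I) < c := by
  have heq : genAlg I = ⋃ T : Finset I, cylAlg (Subtype.val '' (T : Set I)) := by
    ext A
    rw [Set.mem_iUnion]
    constructor
    · rintro ⟨T, hT, hTI, hA⟩
      refine ⟨(hT.preimage (Subtype.val_injective.injOn) : (Subtype.val ⁻¹' T : Set I).Finite).toFinset, ?_⟩
      rw [Set.Finite.coe_toFinset, Subtype.image_preimage_coe, Set.inter_eq_right.2 hTI]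
      exact hA
    · rintro ⟨T, hA⟩
      exact ⟨_, T.finite_toSet.image _, by rintro _ ⟨B, _, rfl⟩; exact B.2, hA⟩
  have hfin : ∀ T : Finset I, (cylAlg (Subtype.val '' (T : Set I))).Finite := fun T =>
    finite_cylAlg (T.finite_toSet.image _)
  rw [heq]
  rcases finite_or_infinite I with h | h
  · exact (Cardinal.lt_aleph0_iff_set_finite.2 (Set.finite_iUnion hfin)).trans_le hc
  · refine lt_of_le_of_lt ?_ hI
    refine (mk_iUnion_le _).trans ?_
    rw [mk_finset_of_infinite]
    refine mul_le_of_le (aleph0_le_mk I) le_rfl (ciSup_le' fun T => ?_)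
    exact (Cardinal.lt_aleph0_iff_set_finite.2 (hfin T)).le.trans (aleph0_le_mk I)

/-- `m₀(Γ)` has the SVM property for set algebras of cardinality at most `cf Γ`. -/
theorem mZero_svm_cof (Γ : Type) [Infinite Γ] :
    HasKappaSVMBound (mZero Γ) (Order.succ (#Γ).ord.cof) 235 := by
  intro Ω F hF hcard ν hν
  rw [Order.lt_succ_iff] at hcard
  have hcof := aleph0_le_cof_ord Γ
  obtain ⟨e⟩ : Nonempty (F ≃ (#F).ord.ToType) := Cardinal.eq.1 (mk_ord_toType _).symm
  -- `I b` is the initial segment of `F`, up to and including `b`, in a well-order of type `ord #F`.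
  let I : (#F).ord.ToType → Set (Set Ω) := fun b => Subtype.val '' (e ⁻¹' Set.Iic b)
  have hI : ∀ b, #(I b) < (#Γ).ord.cof := by
    intro b
    refine mk_image_le.trans_lt ?_
    rw [mk_preimage_equiv, ← Set.Iio_insert]
    refine mk_insert_le.trans_lt (add_lt_of_lt hcof ?_ (one_lt_aleph0.trans_le hcof))
    refine lt_of_lt_of_le ?_ hcard
    simpa using mk_Iio_lt b (by simp)
  have hImono : ∀ b b', b ≤ b' → I b ⊆ I b' := fun b b' h =>
    Set.image_mono fun A hA => le_trans (show e A ≤ b from hA) h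
  have hIF : ∀ b, genAlg (I b) ⊆ F := fun b => genAlg_subset hF (by
    rintro _ ⟨A, _, rfl⟩; exact A.2)
  -- Outside the small set `S b`, the coordinates of `ν` are bounded by `1` on `genAlg (I b)`.
  let S : (#F).ord.ToType → Set Γ := fun b => ⋃ A : genAlg (I b), {γ | 1 ≤ |(ν A.1).1 γ|}
  have hS : ∀ b, #(S b) < #Γ := fun b =>
    mk_iUnion_lt_of_lt_cof (mk_genAlg_lt hcof (hI b))
      fun A => mk_lt_of_mem_mZero (ν A.1).2 1 one_pos
  -- `G γ` is an increasing union of subalgebras on which the coordinate `γ` of `ν` is bounded by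
  -- `1`. It is empty if `γ` lies in every `S b`.
  let G : Γ → Set (Set Ω) := fun γ => {A | ∃ b, γ ∉ S b ∧ A ∈ genAlg (I b)}
  have hex : ∀ γ, ∃ μ : Set Ω → ℝ, VectMeas F μ ∧ (∀ A ∈ F, |(ν A).1 γ - μ A| ≤ 235) ∧
      ∀ A ∈ G γ, μ A = 0 := by
    intro γ
    refine exists_measure_vanishing (ν := fun A => (ν A).1 γ) hF ?_ ?_ ?_ ?_ ?_
    · rintro A ⟨b, _, hA⟩
      exact hIF b hA
    · rintro A ⟨b, hb, hA⟩
      exact ⟨b, hb, compl_mem_genAlg hA⟩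
    · rintro A ⟨b, hb, hA⟩ B ⟨b', hb', hB⟩
      rcases le_total b b' with h | h
      · exact ⟨b', hb', union_mem_genAlg (genAlg_mono (hImono _ _ h) hA) hB⟩
      · exact ⟨b, hb, union_mem_genAlg hA (genAlg_mono (hImono _ _ h) hB)⟩
    · intro A hA B hB hAB
      exact (abs_apply_le_norm (ν (A ∪ B) - ν A - ν B) γ).trans (hν A hA B hB hAB)
    · rintro A ⟨b, hb, hA⟩
      by_contra hcon
      exact hb (Set.mem_iUnion.2 ⟨⟨A, hA⟩, (not_le.1 hcon).le⟩)
  choose m hm hmb hm0 using hex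
  have hval : ∀ A, ∃ x : mZero Γ, A ∈ F → ∀ γ, x.1 γ = m γ A := by
    intro A
    by_cases hA : A ∈ F
    · obtain ⟨x, hx⟩ := exists_mZero_eq (fun γ => m γ A) (‖ν A‖ + 235) (by
        intro γ
        have h1 := abs_apply_le_norm (ν A) γ
        have h2 := hmb γ A hA
        rw [abs_le] at *
        constructor <;> linarith) (by
        refine (mk_le_mk_of_subset ?_).trans_lt (hS (e ⟨A, hA⟩))
        intro γ hγ
        by_contra hcon
        exact hγ (hm0 γ A ⟨_, hcon, subset_genAlg _ ⟨⟨A, hA⟩, le_refl (e ⟨A, hA⟩), rfl⟩⟩))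
      exact ⟨x, fun _ => hx⟩
    · exact ⟨0, fun h => absurd h hA⟩
  choose μ hμ using hval
  refine ⟨μ, ?_, ?_⟩
  · intro A hA B hB hAB
    apply Subtype.ext
    apply lp.ext
    funext γ
    change (μ (A ∪ B)).1 γ = (μ A).1 γ + (μ B).1 γ
    rw [hμ _ (hF.2.2 A hA B hB), hμ A hA, hμ B hB]
    exact hm γ A hA B hB hAB
  · intro A hA
    refine mZero_norm_le (by norm_num) fun γ => ?_
    change |(ν A).1 γ - (μ A).1 γ| ≤ 235
    rw [hμ A hA]
    exact hmb γ A hA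

/-! ### A counterexample on an algebra of cardinality `Γ⁺` -/

/-- A function `Γ → Γ` eventually different from each of at most `#Γ` given ones: its value at `x`
only has to avoid the values at `x` of the functions of rank at most that of `x`. -/
theorem exists_eventually_different {Γ J : Type} [Infinite Γ] (hJ : #J ≤ #Γ) (φ : J → Γ → Γ) :
    ∃ ψ : Γ → Γ, ∀ j, #{x | ψ x = φ j x} < #Γ := by
  obtain ⟨e⟩ : Nonempty (Γ ≃ (#Γ).ord.ToType) := Cardinal.eq.1 (mk_ord_toType _).symm
  obtain ⟨r⟩ : Nonempty (J ↪ (#Γ).ord.ToType) := by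
    rw [← Cardinal.le_def, mk_ord_toType]; exact hJ
  have hIic : ∀ b : (#Γ).ord.ToType, #(Set.Iic b) < #Γ := fun b => by
    simpa using mk_Iic_lt b (by simp) (by simp)
  have hex : ∀ x, ∃ y, ∀ j, r j ≤ e x → y ≠ φ j x := by
    intro x
    by_contra! hcon
    have h1 : (Set.univ : Set Γ) ⊆ (fun j => φ j x) '' (r ⁻¹' Set.Iic (e x)) := by
      intro y _
      obtain ⟨j, hj, hy⟩ := hcon y
      exact ⟨j, hj, hy.symm⟩
    have h2 := (mk_le_mk_of_subset h1).trans (mk_image_le.trans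
      (mk_preimage_of_injective _ (Set.Iic (e x)) r.injective))
    rw [mk_univ] at h2
    exact absurd (hIic (e x)) (not_lt.2 h2)
  choose ψ hψ using hex
  refine ⟨ψ, fun j => ?_⟩
  have hsub : {x | ψ x = φ j x} ⊆ e ⁻¹' Set.Iic (r j) := by
    intro x hx
    by_contra hcon
    exact hψ x j (not_le.1 hcon).le hx
  refine (mk_le_mk_of_subset hsub).trans_lt ?_
  rw [mk_preimage_equiv]
  exact hIic _

/-- A family of `Γ⁺` pairwise eventually different functions `Γ → Γ`, built by transfinite recursion. -/
theorem exists_eventually_different_family (Γ : Type) [Infinite Γ] :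
    ∃ φ : (Order.succ #Γ).ord.ToType → Γ → Γ, ∀ a b, a ≠ b → #{x | φ a x = φ b x} < #Γ := by
  have hstep : ∀ (a : (Order.succ #Γ).ord.ToType) (φ : ∀ b, b < a → Γ → Γ),
      ∃ ψ : Γ → Γ, ∀ b (hb : b < a), #{x | ψ x = φ b hb x} < #Γ := by
    intro a φ
    obtain ⟨ψ, hψ⟩ := exists_eventually_different (J := Set.Iio a) (by
      rw [← Order.lt_succ_iff]
      simpa using mk_Iio_lt a (by simp)) (fun b => φ b.1 b.2)
    exact ⟨ψ, fun b hb => hψ ⟨b, hb⟩⟩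
  choose step hstep using hstep
  let φ : (Order.succ #Γ).ord.ToType → Γ → Γ := wellFounded_lt.fix step
  have hlt : ∀ a b, b < a → #{x | φ a x = φ b x} < #Γ := by
    intro a b hb
    have : φ a = step a fun b _ => φ b := wellFounded_lt.fix_eq step a
    rw [this]
    exact hstep a (fun b _ => φ b) b hb
  refine ⟨φ, fun a b hab => ?_⟩
  rcases lt_or_gt_of_ne hab with h | h
  · simpa only [eq_comm] using hlt b a h
  · exact hlt a b h

/-- A family of `Γ⁺` subsets of `Γ` of full cardinality with pairwise small intersections: the graphs
of eventually different functions, moved along a bijection `Γ × Γ ≃ Γ`. -/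
theorem exists_almost_disjoint (Γ : Type) [Infinite Γ] :
    ∃ N : (Order.succ #Γ).ord.ToType → Set Γ, (∀ a, #Γ ≤ #(N a)) ∧
      ∀ a b, a ≠ b → #(N a ∩ N b : Set Γ) < #Γ := by
  obtain ⟨φ, hφ⟩ := exists_eventually_different_family Γ
  obtain ⟨q⟩ : Nonempty (Γ × Γ ≃ Γ) := Cardinal.eq.1 (by simp)
  refine ⟨fun a => Set.range fun x => q (x, φ a x), fun a => ?_, fun a b hab => ?_⟩
  · rw [mk_range_eq]
    intro x y h
    exact (Prod.ext_iff.1 (q.injective h)).1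
  · refine lt_of_le_of_lt ?_ (hφ a b hab)
    have hsub : (Set.range fun x => q (x, φ a x)) ∩ (Set.range fun x => q (x, φ b x)) ⊆
        (fun x => q (x, φ a x)) '' {x | φ a x = φ b x} := by
      rintro _ ⟨⟨x, rfl⟩, ⟨y, hy⟩⟩
      have h := Prod.ext_iff.1 (q.injective hy)
      obtain rfl : y = x := h.1
      exact ⟨y, h.2.symm, rfl⟩
    exact (mk_le_mk_of_subset hsub).trans mk_image_le

/-- `m₀(Γ)` fails the SVM property on the finite–cofinite algebra of `Γ⁺`. -/
theorem not_mZero_svm (Γ : Type) [Infinite Γ] (v : ℝ) :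
    ¬ HasKappaSVMBound (mZero Γ) (Order.succ (Order.succ #Γ)) v := by
  classical
  intro hsvm
  obtain ⟨N, hNc, hN⟩ := exists_almost_disjoint Γ
  generalize hK : (Order.succ #Γ).ord.ToType = K at N hNc hN
  have hKc : #K = Order.succ #Γ := by rw [← hK, mk_ord_toType]
  have hKinf : Infinite K := by
    rw [infinite_iff, hKc]
    exact (aleph0_le_mk Γ).trans (Order.le_succ _)
  let cnt : Finset K → Γ → ℕ := fun A γ => (A.filter fun a => γ ∈ N a).card
  have hcnt : ∀ A B, Disjoint A B → ∀ γ, cnt (A ∪ B) γ = cnt A γ + cnt B γ := by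
    intro A B h γ
    simp only [cnt, Finset.filter_union]
    exact Finset.card_union_of_disjoint (Finset.disjoint_filter_filter h)
  -- On a finite `A` the counterexample is `γ ↦ max (cnt A γ - 1) 0`; the truncated subtraction is
  -- intended. It is supported on the union of the small intersections `N a ∩ N b`.
  have hx : ∀ A : Finset K, ∃ x : mZero Γ, ∀ γ, x.1 γ = ((cnt A γ - 1 : ℕ) : ℝ) := by
    intro A
    refine exists_mZero_eq _ A.card (fun γ => ?_) ?_
    · rw [abs_of_nonneg (by positivity)]
      exact_mod_cast (Nat.sub_le _ _).trans (Finset.card_filter_le _ _)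
    · have hsub : {γ | ((cnt A γ - 1 : ℕ) : ℝ) ≠ 0} ⊆ ⋃ p : A.offDiag, N p.1.1 ∩ N p.1.2 := by
        intro γ hγ
        have h1 : 1 < cnt A γ := by
          have : cnt A γ - 1 ≠ 0 := by exact_mod_cast hγ
          omega
        obtain ⟨a, ha, b, hb, hab⟩ := Finset.one_lt_card.1 h1
        rw [Finset.mem_filter] at ha hb
        exact Set.mem_iUnion.2 ⟨⟨(a, b), Finset.mem_offDiag.2 ⟨ha.1, hb.1, hab⟩⟩, ha.2, hb.2⟩
      refine (mk_le_mk_of_subset hsub).trans_lt (mk_iUnion_lt_of_lt_cof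
        ((lt_aleph0_of_finite _).trans_le (aleph0_le_cof_ord Γ)) ?_)
      rintro ⟨⟨a, b⟩, hp⟩
      exact hN a b (Finset.mem_offDiag.1 hp).2.2
  choose x hx using hx
  have hxadd : ∀ A B, Disjoint A B → ‖x (A ∪ B) - x A - x B‖ ≤ 1 := by
    intro A B h
    refine mZero_norm_le zero_le_one fun γ => ?_
    change |(x (A ∪ B)).1 γ - (x A).1 γ - (x B).1 γ| ≤ 1
    rw [hx, hx, hx, hcnt A B h]
    generalize cnt A γ = p
    generalize cnt B γ = r
    rcases p with _ | p <;> rcases r with _ | r <;> simp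
    ring_nf
    simp
  let F : Set (Set K) := {A | A.Finite ∨ Aᶜ.Finite}
  have hF : IsSetAlg F := by
    refine ⟨Or.inl Set.finite_empty, ?_, ?_⟩
    · rintro A (h | h)
      · exact Or.inr (by rwa [compl_compl])
      · exact Or.inl h
    · rintro A (hA | hA) B hB
      · rcases hB with hB | hB
        · exact Or.inl (hA.union hB)
        · exact Or.inr (hB.subset (Set.compl_subset_compl.2 Set.subset_union_right))
      · exact Or.inr (hA.subset (Set.compl_subset_compl.2 Set.subset_union_left))
  have hFc : #F < Order.succ (Order.succ #Γ) := by
    rw [Order.lt_succ_iff, ← hKc]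
    have hsub : F ⊆ Set.range fun s : Finset K ⊕ Finset K =>
        s.elim (fun a : Finset K => (a : Set K)) (fun a : Finset K => (a : Set K)ᶜ) := by
      rintro A (h | h)
      · exact ⟨Sum.inl h.toFinset, by simp⟩
      · exact ⟨Sum.inr h.toFinset, by simp⟩
    refine (mk_le_mk_of_subset hsub).trans (mk_range_le.trans ?_)
    simp
  have hnf : ∀ a : Finset K, ¬ ((a : Set K)ᶜ).Finite := fun a => a.finite_toSet.infinite_compl
  -- The extension to cofinite sets is by `ν Aᶜ = -ν A`.
  obtain ⟨ν, hν1, hν2⟩ : ∃ ν : Set K → mZero Γ, (∀ a : Finset K, ν a = x a) ∧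
      ∀ a : Finset K, ν (a : Set K)ᶜ = -x a := by
    refine ⟨fun A => if h : A.Finite then x h.toFinset else
      if h : Aᶜ.Finite then -x h.toFinset else 0, fun a => ?_, fun a => ?_⟩
    · simp
    · have h1 := hnf a
      have h2 : ((a : Set K)ᶜᶜ).Finite := by rw [compl_compl]; exact a.finite_toSet
      have h3 : h2.toFinset = a := by ext; simp
      simp only [h1, h2, dite_true, dite_false, h3]
  have hmix : ∀ a b : Finset K, Disjoint (a : Set K) (b : Set K)ᶜ →
      ‖ν ((a : Set K) ∪ (b : Set K)ᶜ) - ν a - ν (b : Set K)ᶜ‖ ≤ 1 := by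
    intro a b hab
    have hsub : a ⊆ b := by
      intro i hi
      by_contra hcon
      exact Set.disjoint_left.1 hab hi hcon
    have h1 : ((a : Set K) ∪ (b : Set K)ᶜ) = ((b \ a : Finset K) : Set K)ᶜ := by
      ext i; simp; tauto
    rw [h1, hν2, hν2, hν1]
    have h2 := hxadd (b \ a) a Finset.sdiff_disjoint
    rw [Finset.sdiff_union_of_subset hsub] at h2
    convert h2 using 2
    abel
  have hνadd : OneAdd F ν := by
    rintro A (hA | hA) B (hB | hB) hAB
    · obtain ⟨a, rfl⟩ := hA.exists_finset_coe
      obtain ⟨b, rfl⟩ := hB.exists_finset_coe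
      rw [← Finset.coe_union, hν1, hν1, hν1]
      exact hxadd a b (Finset.disjoint_coe.1 hAB)
    · obtain ⟨a, rfl⟩ := hA.exists_finset_coe
      obtain ⟨b, hb⟩ := hB.exists_finset_coe
      obtain rfl : B = (b : Set K)ᶜ := by rw [hb, compl_compl]
      exact hmix a b hAB
    · obtain ⟨a, rfl⟩ := hB.exists_finset_coe
      obtain ⟨b, hb⟩ := hA.exists_finset_coe
      obtain rfl : A = (b : Set K)ᶜ := by rw [hb, compl_compl]
      have := hmix a b hAB.symm
      rwa [Set.union_comm, sub_right_comm]
    · exfalso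
      obtain ⟨a, ha⟩ := hA.exists_finset_coe
      refine hnf a ((hB.subset ?_))
      rw [ha, compl_compl]
      exact Set.subset_compl_iff_disjoint_right.2 hAB
  obtain ⟨μ, hμ, hμv⟩ := hsvm K F hF hFc ν hνadd
  have hfinF : ∀ a : Finset K, (a : Set K) ∈ F := fun a => Or.inl a.finite_toSet
  have hμsum : ∀ a : Finset K, μ a = ∑ i ∈ a, μ {i} := by
    intro a
    induction a using Finset.induction_on with
    | empty =>
      have := hμ ∅ hF.1 ∅ hF.1 (Set.disjoint_empty _)
      simpa using this
    | insert i a hi ih =>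
      rw [Finset.sum_insert hi, ← ih, Finset.coe_insert, Set.insert_eq]
      exact hμ {i} (Or.inl (Set.finite_singleton i)) a (hfinF a) (by simpa using hi)
  have hpt : ∀ i, ∃ γ ∈ N i, |(μ {i}).1 γ| < 1 / 2 := by
    intro i
    by_contra! hcon
    exact absurd (mk_lt_of_mem_mZero (μ {i}).2 (1 / 2) (by norm_num))
      (not_lt.2 ((hNc i).trans (mk_le_mk_of_subset hcon)))
  choose pt hptN hpt using hpt
  -- There are more than `#Γ` indices `i`, so one coordinate `γ` serves infinitely many of them. On
  -- `n` of these `ν` takes the value `n - 1` at `γ`, whereas `μ` is at most `n / 2`.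
  obtain ⟨γ, hγ⟩ := exists_infinite_fiber pt (by rw [hKc]; exact Order.lt_succ _)
  obtain ⟨n, hn⟩ := exists_nat_gt (2 * (v + 1))
  obtain ⟨a, ha, hac⟩ := (Set.infinite_coe_iff.1 hγ).exists_subset_card_eq n
  have hai : ∀ i ∈ a, pt i = γ := fun i hi => ha hi
  have h1 := (abs_apply_le_norm (ν a - μ a) γ).trans (hμv a (hfinF a))
  change |(ν a).1 γ - (μ a).1 γ| ≤ v at h1
  have h2 : cnt a γ = n := by
    rw [← hac]
    simp only [cnt]
    congr 1
    exact Finset.filter_true_of_mem fun i hi => hai i hi ▸ hptN i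
  have h3 : (μ a).1 γ ≤ n * (1 / 2) := by
    have : (μ a).1 γ = ∑ i ∈ a, (μ {i}).1 γ := by
      rw [hμsum a, Submodule.coe_sum, lp.coeFn_sum, Finset.sum_apply]
    rw [this, ← hac, ← nsmul_eq_mul]
    refine Finset.sum_le_card_nsmul _ _ _ fun i hi => ?_
    have := hpt i
    rw [hai i hi] at this
    exact (le_abs_self _).trans this.le
  rw [hν1, hx, h2] at h1
  have h4 : (n : ℝ) - 1 ≤ ((n - 1 : ℕ) : ℝ) := by
    have : n ≤ (n - 1) + 1 := by omega
    have : (n : ℝ) ≤ ((n - 1 : ℕ) : ℝ) + 1 := by exact_mod_cast this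
    linarith
  rw [abs_le] at h1
  linarith

/-! ### Conclusion -/

/-- for an infinite Γ, m₀(Γ) has the cf(Γ)⁺-SVM property but
fails the Γ⁺⁺-SVM property; in particular, for regular Γ its SVM character
(the least κ for which the κ-SVM property fails) equals Γ⁺⁺. -/
theorem stmt_14 (Γ : Type) [Infinite Γ] :
    (∃ v : ℝ, HasKappaSVMBound (↥(mZero Γ)) (Order.succ (((#Γ).ord).cof)) v) ∧
    (¬ ∃ v : ℝ, HasKappaSVMBound (↥(mZero Γ)) (Order.succ (Order.succ (#Γ))) v) ∧
    ((#Γ).IsRegular →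
      (∀ κ : Cardinal, κ < Order.succ (Order.succ (#Γ)) →
        ∃ v : ℝ, HasKappaSVMBound (↥(mZero Γ)) κ v) ∧
      ¬ ∃ v : ℝ, HasKappaSVMBound (↥(mZero Γ)) (Order.succ (Order.succ (#Γ))) v) := by
  have hb : ¬ ∃ v : ℝ, HasKappaSVMBound (↥(mZero Γ)) (Order.succ (Order.succ (#Γ))) v :=
    fun ⟨v, hv⟩ => not_mZero_svm Γ v hv
  refine ⟨⟨235, mZero_svm_cof Γ⟩, hb, fun hreg => ⟨fun κ hκ => ⟨235, ?_⟩, hb⟩⟩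
  intro Ω F hF hcard
  refine mZero_svm_cof Γ Ω F hF (hcard.trans_le ?_)
  rw [hreg.cof_ord]
  exact Order.lt_succ_iff.1 hκ
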